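/- Assume the Diophantine setting of the context and set τ := (15/2)(2+q). Then for all finitely supported α, β : ℤ → ℕ with equal total mass |α| = |β| ≥ 1, α ≠ β, and every j ∈ ℤ with α_j + β_j ≥ 1, one has γ · ⟨j⟩^{2τ} ≤ e^{27(2+q)} · (N + |π|)^{3τ} · |∑_{i∈ℤ} ω_i (α_i − β_i)| · ∏_{i∈ℤ} ⟨i⟩^{τ(α_i+β_i)}, where N := |α| + |β| and π := ∑_{i∈ℤ} i·(α_i − β_i). -/

import Mathlib

/-!
Put `ℓ = α - β`, `D = |∑ ω_i ℓ_i|`, `R = N + |π|` and `P = ∏ ⟨i⟩^{|ℓ_i|}`. Each Diophantine factor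
with `|n| ≥ 2` is absorbed by a power of `⟨n⟩^{|ℓ_n|}`, and only three factors remain, so that
`γ ≤ D · (2 N² P)^{3s}` with `2 s = 2 + q`. It remains to bound `⟨j⟩`.

If `ℓ_j = 0`, then `α_j = β_j ≥ 1` and `∏ ⟨i⟩^{α_i + β_i}` contains `⟨j⟩²` on top of `P`.

If `ℓ_j ≠ 0` and `D ≥ 1`, momentum alone suffices: it gives `⟨j⟩² ≤ R P`. If `D < 1`, the energy
`∑ i² ℓ_i` is at most `1 + N / 2`. Let `b` be a largest index left after removing one unit at `j`,
and let `Q = P / (⟨j⟩ ⟨b⟩)` collect all the others. Momentum gives `⟨j⟩ ≤ R ⟨b⟩`. Since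
`|j² ± b²| ≥ |j|` unless `j² = b²` with opposite signs, energy gives `⟨j⟩ ≤ 2 R Q²`; in the
exceptional case `b = -j`, because two units at one index have the same sign, and momentum gives it.
Hence `⟨j⟩³ ≤ 2 R³ (⟨b⟩ Q)²`.
-/

open scoped BigOperators

/-- `⟨j⟩ := max(|j|,1)` as a real number. -/
noncomputable def jap (j : ℤ) : ℝ := max (|(j : ℝ)|) 1

open Finsupp

section IntegerIndices

variable {ι : Type*}

/-- The multi-index `|ℓ|` of absolute values, through which monomials and masses of integer-valued
indices are measured. -/
noncomputable def absIndex (ℓ : ι →₀ ℤ) : ι →₀ ℕ := ℓ.mapRange Int.natAbs rfl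

/-- The `ℓ¹` norm `∑ |ℓ_i|`. -/
noncomputable def l1Mass (ℓ : ι →₀ ℤ) : ℕ := degree (absIndex ℓ)

/-- The entry of `ℓ` at `i` is moved by one unit towards `0`. This peels off one signed particle of
a difference `α - β`, whichever of `α` and `β` it belongs to. -/
noncomputable def eraseUnit (ℓ : ι →₀ ℤ) (i : ι) : ι →₀ ℤ := ℓ - single i (ℓ i).sign

/-- The difference `α - β` of two multi-indices, with values in `ℤ`. -/
noncomputable def diffIndex (α β : ι →₀ ℕ) : ι →₀ ℤ :=
  α.mapRange (fun n : ℕ => (n : ℤ)) rfl - β.mapRange (fun n : ℕ => (n : ℤ)) rfl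

@[simp]
lemma absIndex_apply (ℓ : ι →₀ ℤ) (i : ι) : absIndex ℓ i = (ℓ i).natAbs := rfl

@[simp]
lemma support_absIndex (ℓ : ι →₀ ℤ) : (absIndex ℓ).support = ℓ.support := by
  ext i; simp

@[simp]
lemma diffIndex_apply (α β : ι →₀ ℕ) (i : ι) : diffIndex α β i = (α i : ℤ) - β i := rfl

lemma diffIndex_ne_zero {α β : ι →₀ ℕ} (h : α ≠ β) : diffIndex α β ≠ 0 := by
  obtain ⟨i, hi⟩ := Finsupp.ne_iff.mp h
  refine Finsupp.ne_iff.mpr ⟨i, ?_⟩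
  simpa [sub_eq_zero] using hi

lemma absIndex_diffIndex_le (α β : ι →₀ ℕ) : absIndex (diffIndex α β) ≤ α + β := fun i => by
  simp only [absIndex_apply, diffIndex_apply, Finsupp.add_apply]
  omega

lemma support_diffIndex_subset [DecidableEq ι] (α β : ι →₀ ℕ) :
    (diffIndex α β).support ⊆ α.support ∪ β.support := fun i hi => by
  simp only [mem_support_iff, diffIndex_apply, Finset.mem_union] at hi ⊢
  omega

lemma absIndex_eq_single_add {ℓ : ι →₀ ℤ} {i : ι} (hi : i ∈ ℓ.support) :
    absIndex ℓ = single i 1 + absIndex (eraseUnit ℓ i) := by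
  classical
  ext k
  rw [mem_support_iff] at hi
  obtain rfl | hk := eq_or_ne i k
  · rcases hi.lt_or_gt with h | h
    · simp only [absIndex_apply, eraseUnit, Finsupp.add_apply, Finsupp.sub_apply, single_eq_same,
        Int.sign_eq_neg_one_of_neg h]
      omega
    · simp only [absIndex_apply, eraseUnit, Finsupp.add_apply, Finsupp.sub_apply, single_eq_same,
        Int.sign_eq_one_of_pos h]
      omega
  · simp [eraseUnit, hk]

lemma l1Mass_eq_one_add {ℓ : ι →₀ ℤ} {i : ι} (hi : i ∈ ℓ.support) :
    l1Mass ℓ = 1 + l1Mass (eraseUnit ℓ i) := by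
  rw [l1Mass, absIndex_eq_single_add hi, map_add, degree_single, l1Mass]

lemma sign_eraseUnit_self {ℓ : ι →₀ ℤ} {i : ι} (hi : i ∈ (eraseUnit ℓ i).support) :
    (eraseUnit ℓ i i).sign = (ℓ i).sign := by
  simp only [mem_support_iff, eraseUnit, Finsupp.sub_apply, single_eq_same] at hi ⊢
  rcases lt_trichotomy (ℓ i) 0 with h | h | h
  · rw [Int.sign_eq_neg_one_of_neg h] at hi ⊢
    exact Int.sign_eq_neg_one_of_neg (by omega)
  · simp [h]
  · rw [Int.sign_eq_one_of_pos h] at hi ⊢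
    exact Int.sign_eq_one_of_pos (by omega)

lemma weight_eq_sign_mul_add (f : ι → ℝ) (ℓ : ι →₀ ℤ) (i : ι) :
    weight f ℓ = (ℓ i).sign * f i + weight f (eraseUnit ℓ i) := by
  rw [eraseUnit, map_sub, weight_single, zsmul_eq_mul, add_sub_cancel]

lemma weight_eq_sum_of_support_subset (f : ι → ℝ) {ℓ : ι →₀ ℤ} {S : Finset ι}
    (hS : ℓ.support ⊆ S) : weight f ℓ = ∑ i ∈ S, f i * (ℓ i : ℝ) := by
  rw [weight_apply, sum_of_support_subset ℓ hS _ (by simp)]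
  exact Finset.sum_congr rfl fun i _ => by rw [zsmul_eq_mul, mul_comm]

lemma sum_union_support_eq_weight_diffIndex [DecidableEq ι] (f : ι → ℝ)
    (α β : ι →₀ ℕ) :
    ∑ i ∈ α.support ∪ β.support, f i * ((α i : ℝ) - (β i : ℝ)) = weight f (diffIndex α β) := by
  rw [weight_eq_sum_of_support_subset f (support_diffIndex_subset α β)]
  exact Finset.sum_congr rfl fun i _ => by rw [diffIndex_apply]; norm_cast

lemma abs_weight_le {f : ι → ℝ} {ℓ : ι →₀ ℤ} {C : ℝ} (h : ∀ i ∈ ℓ.support, |f i| ≤ C) :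
    |weight f ℓ| ≤ C * l1Mass ℓ := by
  rw [weight_eq_sum_of_support_subset f subset_rfl, l1Mass, degree_apply, support_absIndex,
    Nat.cast_sum, Finset.mul_sum]
  refine (Finset.abs_sum_le_sum_abs _ _).trans (Finset.sum_le_sum fun i hi => ?_)
  rw [abs_mul, absIndex_apply, Nat.cast_natAbs, Int.cast_abs]
  gcongr
  exact h i hi

lemma abs_weight_sub_weight_le {f g : ι → ℝ} {C : ℝ} (h : ∀ i, |f i - g i| ≤ C) (ℓ : ι →₀ ℤ) :
    |weight f ℓ - weight g ℓ| ≤ C * l1Mass ℓ := by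
  have hsub : weight f ℓ - weight g ℓ = weight (fun i => f i - g i) ℓ := by
    simp only [weight_apply, Finsupp.sum, smul_sub, Finset.sum_sub_distrib]
  rw [hsub]
  exact abs_weight_le fun i _ => h i

end IntegerIndices

section JapaneseBracket

lemma one_le_jap (j : ℤ) : 1 ≤ jap j := le_max_right _ _

lemma jap_pos (j : ℤ) : 0 < jap j := one_pos.trans_le (one_le_jap j)

lemma abs_le_jap (j : ℤ) : |(j : ℝ)| ≤ jap j := le_max_left _ _

lemma two_le_jap {j : ℤ} (hj : 1 < |j|) : 2 ≤ jap j :=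
  le_trans (by exact_mod_cast hj) (abs_le_jap j)

lemma jap_eq_one {j : ℤ} (hj : |j| ≤ 1) : jap j = 1 :=
  max_eq_right (by exact_mod_cast hj)

/-- The monomial `∏ ⟨i⟩ ^ μ_i`, which measures how large the indices of `μ` are. -/
noncomputable def japProd (μ : ℤ →₀ ℕ) : ℝ := μ.prod fun i m => jap i ^ m

lemma japProd_add (μ ν : ℤ →₀ ℕ) : japProd (μ + ν) = japProd μ * japProd ν :=
  prod_add_index' (fun _ => pow_zero _) fun _ _ _ => pow_add _ _ _

lemma japProd_single (i : ℤ) (m : ℕ) : japProd (single i m) = jap i ^ m :=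
  prod_single_index (pow_zero _)

lemma one_le_japProd (μ : ℤ →₀ ℕ) : 1 ≤ japProd μ :=
  Finset.one_le_prod fun i _ => one_le_pow₀ (one_le_jap i)

lemma japProd_pos (μ : ℤ →₀ ℕ) : 0 < japProd μ := one_pos.trans_le (one_le_japProd μ)

lemma japProd_mono : Monotone japProd := fun μ ν h => by
  rw [← add_tsub_cancel_of_le h, japProd_add]
  exact le_mul_of_one_le_right (japProd_pos μ).le (one_le_japProd _)

lemma jap_le_japProd {μ : ℤ →₀ ℕ} {i : ℤ} (hi : i ∈ μ.support) : jap i ≤ japProd μ := by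
  rw [← pow_one (jap i), ← japProd_single]
  refine japProd_mono (single_le_iff.mpr ?_)
  exact Nat.one_le_iff_ne_zero.mpr (mem_support_iff.mp hi)

lemma prod_jap_rpow {μ : ℤ →₀ ℕ} {S : Finset ℤ} (hS : μ.support ⊆ S) (t : ℝ) :
    ∏ i ∈ S, jap i ^ (t * μ i) = japProd μ ^ t := by
  rw [japProd, prod_of_support_subset μ hS _ (fun _ _ => pow_zero _),
    ← Real.finsetProd_rpow S _ fun i _ => pow_nonneg (jap_pos i).le _]
  refine Finset.prod_congr rfl fun i _ => ?_
  rw [mul_comm, Real.rpow_mul (jap_pos i).le, Real.rpow_natCast]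

lemma prod_union_support_jap_rpow (α β : ℤ →₀ ℕ) (t : ℝ) :
    ∏ i ∈ α.support ∪ β.support, jap i ^ (t * ((α i : ℝ) + (β i : ℝ))) =
      japProd (α + β) ^ t := by
  rw [← prod_jap_rpow support_add]
  exact Finset.prod_congr rfl fun i _ => by rw [Finsupp.add_apply, Nat.cast_add]

lemma japProd_absIndex_eq_mul {ℓ : ℤ →₀ ℤ} {i : ℤ} (hi : i ∈ ℓ.support) :
    japProd (absIndex ℓ) = jap i * japProd (absIndex (eraseUnit ℓ i)) := by
  rw [absIndex_eq_single_add hi, japProd_add, japProd_single, pow_one]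

lemma jap_le_japProd_absIndex {ℓ : ℤ →₀ ℤ} {i : ℤ} (hi : i ∈ ℓ.support) :
    jap i ≤ japProd (absIndex ℓ) :=
  jap_le_japProd (by rwa [support_absIndex])

lemma jap_sq_mul_japProd_le {α β : ℤ →₀ ℕ} {j : ℤ} (hj : 1 ≤ α j) (heq : α j = β j) :
    jap j ^ 2 * japProd (absIndex (diffIndex α β)) ≤ japProd (α + β) := by
  rw [← japProd_single, ← japProd_add]
  refine japProd_mono fun i => ?_
  obtain rfl | hi := eq_or_ne j i
  · simp only [Finsupp.add_apply, single_eq_same, absIndex_apply, diffIndex_apply]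
    omega
  · rw [Finsupp.add_apply, single_eq_of_ne' hi, zero_add]
    exact absIndex_diffIndex_le α β i

end JapaneseBracket

section Diophantine

/-- The Diophantine condition on the frequencies `ω` with constant `γ`; in the setting of the
theorem the exponent is `p = 2 + q`. -/
def IsDiophantine (p γ : ℝ) (ω : ℤ → ℝ) : Prop :=
  ∀ ℓ : ℤ →₀ ℤ, ℓ ≠ 0 →
    γ * ∏ n ∈ ℓ.support, (1 + (ℓ n : ℝ) ^ 2 * jap n ^ p)⁻¹ < |∑ n ∈ ℓ.support, ω n * (ℓ n : ℝ)|

lemma IsDiophantine.lt_two_mul_abs {p γ : ℝ} {ω : ℤ → ℝ} (hdio : IsDiophantine p γ ω) :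
    γ < 2 * |ω 0| := by
  have h := hdio (single 0 1) (by simp)
  have hjap : jap 0 = 1 := jap_eq_one (by simp)
  rw [support_single 0 one_ne_zero] at h
  norm_num [hjap] at h
  linarith

lemma one_add_sq_mul_sq_le_cube_pow {x : ℝ} (hx : 2 ≤ x) {m : ℕ} (hm : 1 ≤ m) :
    (1 + (m : ℝ) ^ 2) * x ^ 2 ≤ (x ^ m) ^ 3 := by
  induction m, hm using Nat.le_induction with
  | base =>
    norm_num
    nlinarith [sq_nonneg x]
  | succ m hm ih =>
    have hm' : (1 : ℝ) ≤ m := by exact_mod_cast hm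
    have hx3 : (2 : ℝ) ^ 3 ≤ x ^ 3 := by gcongr
    calc (1 + ((m + 1 : ℕ) : ℝ) ^ 2) * x ^ 2 ≤ 2 ^ 3 * ((1 + (m : ℝ) ^ 2) * x ^ 2) := by
          rw [← mul_assoc]
          gcongr
          push_cast
          nlinarith
      _ ≤ x ^ 3 * (x ^ m) ^ 3 := by gcongr
      _ = (x ^ (m + 1)) ^ 3 := by ring

lemma one_add_sq_mul_rpow_le {s x : ℝ} (hs : 1 ≤ s) (hx : 2 ≤ x) {m : ℕ} (hm : 1 ≤ m) :
    1 + (m : ℝ) ^ 2 * x ^ (2 * s) ≤ (x ^ m) ^ (3 * s) := by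
  have hx0 : 0 ≤ x := by linarith
  have hxs : 1 ≤ x ^ (2 * s) := Real.one_le_rpow (by linarith) (by linarith)
  calc 1 + (m : ℝ) ^ 2 * x ^ (2 * s) ≤ (1 + (m : ℝ) ^ 2) * x ^ (2 * s) := by linarith
    _ ≤ (1 + (m : ℝ) ^ 2) ^ s * (x ^ 2) ^ s := by
        rw [Real.rpow_mul hx0, Real.rpow_two]
        gcongr
        exact Real.self_le_rpow_of_one_le (le_add_of_nonneg_right (sq_nonneg _)) hs
    _ = ((1 + (m : ℝ) ^ 2) * x ^ 2) ^ s := (Real.mul_rpow (by positivity) (by positivity)).symm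
    _ ≤ ((x ^ m) ^ 3) ^ s := by
        gcongr
        exact one_add_sq_mul_sq_le_cube_pow hx hm
    _ = (x ^ m) ^ (3 * s) := by
        rw [Real.rpow_mul (by positivity)]
        norm_cast

lemma diophantine_factor_le {s : ℝ} (hs : 1 ≤ s) (n : ℤ) {m N : ℕ} (hm : 1 ≤ m) (hN : m ≤ N) :
    1 + (m : ℝ) ^ 2 * jap n ^ (2 * s) ≤
      (if |n| ≤ 1 then 1 + (N : ℝ) ^ 2 else 1) * (jap n ^ m) ^ (3 * s) := by
  split_ifs with hn
  · rw [jap_eq_one hn, one_pow, Real.one_rpow, Real.one_rpow, mul_one, mul_one]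
    gcongr
  · rw [one_mul]
    exact one_add_sq_mul_rpow_le hs (two_le_jap (not_le.mp hn)) hm

lemma card_filter_abs_le_one (S : Finset ℤ) : (S.filter fun n => |n| ≤ 1).card ≤ 3 := by
  have hsub : (S.filter fun n => |n| ≤ 1) ⊆ Finset.Icc (-1) 1 := fun n hn =>
    Finset.mem_Icc.mpr (abs_le.mp (Finset.mem_filter.mp hn).2)
  exact Finset.card_le_card hsub

lemma prod_diophantine_factor_le {s : ℝ} (hs : 1 ≤ s) (ℓ : ℤ →₀ ℤ) :
    ∏ n ∈ ℓ.support, (1 + (ℓ n : ℝ) ^ 2 * jap n ^ (2 * s)) ≤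
      (1 + (l1Mass ℓ : ℝ) ^ 2) ^ 3 * japProd (absIndex ℓ) ^ (3 * s) := by
  set N := l1Mass ℓ
  have hfactor (n : ℤ) (hn : n ∈ ℓ.support) : 1 + (ℓ n : ℝ) ^ 2 * jap n ^ (2 * s) ≤
      (if |n| ≤ 1 then 1 + (N : ℝ) ^ 2 else 1) * (jap n ^ absIndex ℓ n) ^ (3 * s) := by
    have hsq : (ℓ n : ℝ) ^ 2 = (absIndex ℓ n : ℝ) ^ 2 := by
      rw [absIndex_apply, Nat.cast_natAbs, Int.cast_abs, sq_abs]
    rw [hsq]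
    exact diophantine_factor_le hs n (Int.natAbs_pos.mpr (mem_support_iff.mp hn))
      (le_degree n (absIndex ℓ))
  have hpos (n : ℤ) : 0 ≤ 1 + (ℓ n : ℝ) ^ 2 * jap n ^ (2 * s) := by
    have := jap_pos n
    positivity
  refine (Finset.prod_le_prod (fun n _ => hpos n) hfactor).trans ?_
  rw [Finset.prod_mul_distrib, Finset.prod_ite, Finset.prod_const, Finset.prod_const_one, mul_one,
    Real.finsetProd_rpow _ _ fun n _ => pow_nonneg (jap_pos n).le _, ← support_absIndex]
  change _ * japProd (absIndex ℓ) ^ (3 * s) ≤ _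
  have := japProd_pos (absIndex ℓ)
  gcongr
  · exact le_add_of_nonneg_right (sq_nonneg _)
  · exact card_filter_abs_le_one _

lemma IsDiophantine.le_abs_weight_mul {s γ : ℝ} (hs : 1 ≤ s) {ω : ℤ → ℝ}
    (hdio : IsDiophantine (2 * s) γ ω) {ℓ : ℤ →₀ ℤ} (hℓ : ℓ ≠ 0) :
    γ ≤ |weight ω ℓ| *
      (2 * (l1Mass ℓ : ℝ) ^ 2 * japProd (absIndex ℓ)) ^ (3 * s) := by
  have hsum : ∑ n ∈ ℓ.support, ω n * (ℓ n : ℝ) = weight ω ℓ :=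
    (weight_eq_sum_of_support_subset ω subset_rfl).symm
  have hprod : 0 < ∏ n ∈ ℓ.support, (1 + (ℓ n : ℝ) ^ 2 * jap n ^ (2 * s)) :=
    Finset.prod_pos fun n _ => by
      have := jap_pos n
      positivity
  have hdioℓ := hdio ℓ hℓ
  rw [hsum, Finset.prod_inv_distrib, ← div_eq_mul_inv, div_lt_iff₀ hprod] at hdioℓ
  refine hdioℓ.le.trans (mul_le_mul_of_nonneg_left ?_ (abs_nonneg _))
  refine (prod_diophantine_factor_le hs ℓ).trans ?_
  obtain ⟨i, hi⟩ := support_nonempty_iff.mpr hℓ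
  have hN : (1 : ℝ) ≤ l1Mass ℓ := by
    exact_mod_cast (l1Mass_eq_one_add hi).symm ▸ Nat.le_add_right 1 _
  have hP := japProd_pos (absIndex ℓ)
  rw [Real.mul_rpow (by positivity) hP.le]
  gcongr
  calc (1 + (l1Mass ℓ : ℝ) ^ 2) ^ 3 ≤ (2 * (l1Mass ℓ : ℝ) ^ 2) ^ (3 : ℝ) := by
        rw [Real.rpow_ofNat]
        gcongr
        nlinarith
    _ ≤ (2 * (l1Mass ℓ : ℝ) ^ 2) ^ (3 * s) :=
        Real.rpow_le_rpow_of_exponent_le (by nlinarith) (by linarith)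

end Diophantine

section MomentumAndEnergy

/-- The `ℓ¹` norm of `ℓ` plus the absolute value of its momentum `∑ i ℓ_i`. For `ℓ = α - β` it is
at most `N + |π|`, with a smaller mass than `N` when units of `α` and `β` cancel. -/
noncomputable def momentumScale (ℓ : ℤ →₀ ℤ) : ℝ :=
  l1Mass ℓ + |weight (fun i : ℤ => (i : ℝ)) ℓ|

lemma l1Mass_le_momentumScale (ℓ : ℤ →₀ ℤ) : l1Mass ℓ ≤ momentumScale ℓ :=
  le_add_of_nonneg_right (abs_nonneg _)

lemma one_le_momentumScale {ℓ : ℤ →₀ ℤ} {i : ℤ} (hi : i ∈ ℓ.support) : 1 ≤ momentumScale ℓ := by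
  refine le_trans ?_ (l1Mass_le_momentumScale ℓ)
  exact_mod_cast (l1Mass_eq_one_add hi).symm ▸ Nat.le_add_right 1 _

lemma momentumScale_diffIndex_le (α β : ℤ →₀ ℕ) :
    momentumScale (diffIndex α β) ≤
      (degree α + degree β : ℕ) + |weight (fun i : ℤ => (i : ℝ)) (diffIndex α β)| := by
  rw [momentumScale, ← map_add, l1Mass]
  gcongr
  exact degree_mono (absIndex_diffIndex_le α β)

lemma jap_le_momentumScale_mul {ℓ : ℤ →₀ ℤ} {a : ℤ} (ha : a ∈ ℓ.support) {C : ℝ} (hC : 1 ≤ C)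
    (hrest : ∀ i ∈ (eraseUnit ℓ a).support, jap i ≤ C) : jap a ≤ momentumScale ℓ * C := by
  refine max_le ?_ (one_le_mul_of_one_le_of_one_le (one_le_momentumScale ha) hC)
  have hsign : |((ℓ a).sign : ℝ)| = 1 := by
    exact_mod_cast Int.abs_sign_of_ne_zero (mem_support_iff.mp ha)
  have hmom := weight_eq_sign_mul_add (fun i : ℤ => (i : ℝ)) ℓ a
  have hrest' := abs_weight_le (f := fun i : ℤ => (i : ℝ))
    fun i hi => (abs_le_jap i).trans (hrest i hi)
  have hdeg : (l1Mass ℓ : ℝ) = 1 + l1Mass (eraseUnit ℓ a) := by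
    exact_mod_cast l1Mass_eq_one_add ha
  rw [momentumScale, hdeg]
  set π := weight (fun i : ℤ => (i : ℝ)) ℓ
  set ρ := weight (fun i : ℤ => (i : ℝ)) (eraseUnit ℓ a)
  calc |(a : ℝ)| = |π - ρ| := by rw [hmom, add_sub_cancel_right, abs_mul, hsign, one_mul]
    _ ≤ |π| + |ρ| := abs_sub _ _
    _ ≤ (1 + l1Mass (eraseUnit ℓ a) + |π|) * C := by nlinarith [abs_nonneg π]

lemma jap_sq_le_momentumScale_mul {ℓ : ℤ →₀ ℤ} {a : ℤ} (ha : a ∈ ℓ.support) :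
    jap a ^ 2 ≤ momentumScale ℓ * japProd (absIndex ℓ) := by
  have hA := jap_pos a
  have hmom := jap_le_momentumScale_mul ha (one_le_japProd (absIndex (eraseUnit ℓ a)))
    fun i hi => jap_le_japProd_absIndex hi
  calc jap a ^ 2 = jap a * jap a := sq _
    _ ≤ jap a * (momentumScale ℓ * japProd (absIndex (eraseUnit ℓ a))) := by gcongr
    _ = momentumScale ℓ * japProd (absIndex ℓ) := by rw [japProd_absIndex_eq_mul ha]; ring

lemma abs_le_abs_sq_sub_sq {a b : ℤ} (h₁ : a ≠ b) (h₂ : a ≠ -b) : |a| ≤ |a ^ 2 - b ^ 2| := by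
  have hsub : 1 ≤ |a - b| := Int.one_le_abs (sub_ne_zero.mpr h₁)
  have hadd : 1 ≤ |a + b| := Int.one_le_abs fun h => h₂ (by omega)
  have htwo : 2 * |a| ≤ |a + b| + |a - b| := by
    calc 2 * |a| = |(a + b) + (a - b)| := by rw [add_add_sub_cancel, ← two_mul, abs_mul, abs_two]
      _ ≤ |a + b| + |a - b| := abs_add_le _ _
  rw [sq_sub_sq, abs_mul]
  nlinarith

lemma abs_le_abs_signed_sq_or_abs_signed {a b ε δ : ℤ} (hε : |ε| = 1) (hδ : |δ| = 1)
    (hab : a = b → ε = δ) :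
    |a| ≤ |ε * a ^ 2 + δ * b ^ 2| ∨ |a| ≤ |ε * a + δ * b| := by
  have hεmul (x : ℤ) : |ε * x| = |x| := by rw [abs_mul, hε, one_mul]
  have hδ_eq : δ = ε ∨ δ = -ε := abs_eq_abs.mp (hδ.trans hε.symm)
  rcases hδ_eq with rfl | rfl
  · left
    rw [← mul_add, hεmul, abs_of_nonneg (by positivity : 0 ≤ a ^ 2 + b ^ 2)]
    have hsq : |a| ≤ a ^ 2 := Int.natCast_natAbs a ▸ Int.natAbs_le_self_sq a
    exact hsq.trans (le_add_of_nonneg_right (sq_nonneg b))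
  · have hne : a ≠ b := fun h => by
      have hε0 : ε = 0 := self_eq_neg.mp (hab h)
      simp [hε0] at hε
    obtain rfl | hne' := eq_or_ne a (-b)
    · right
      rw [neg_mul, ← sub_eq_add_neg, ← mul_sub, hεmul, ← neg_add', abs_neg, abs_neg, ← two_mul,
        abs_mul, abs_two]
      linarith [abs_nonneg b]
    · left
      rw [neg_mul, ← sub_eq_add_neg, ← mul_sub, hεmul]
      exact abs_le_abs_sq_sub_sq hne hne'

lemma abs_signed_pair_le {ι : Type*} {f : ι → ℝ} {ℓ : ι →₀ ℤ} {a b : ι} {C : ℝ}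
    (h : ∀ i ∈ (eraseUnit (eraseUnit ℓ a) b).support, |f i| ≤ C) :
    |((ℓ a).sign : ℝ) * f a + ((eraseUnit ℓ a b).sign : ℝ) * f b| ≤
      |weight f ℓ| + C * l1Mass (eraseUnit (eraseUnit ℓ a) b) := by
  have hpair : ((ℓ a).sign : ℝ) * f a + ((eraseUnit ℓ a b).sign : ℝ) * f b =
      weight f ℓ - weight f (eraseUnit (eraseUnit ℓ a) b) := by
    rw [weight_eq_sign_mul_add f ℓ a, weight_eq_sign_mul_add f (eraseUnit ℓ a) b]
    ring
  rw [hpair]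
  exact (abs_sub _ _).trans (by gcongr; exact abs_weight_le h)

lemma abs_le_energy_add_or_abs_le_momentum_add {ℓ : ℤ →₀ ℤ} {a b : ℤ} (ha : a ∈ ℓ.support)
    (hb : b ∈ (eraseUnit ℓ a).support) {Q : ℝ}
    (hQ : ∀ i ∈ (eraseUnit (eraseUnit ℓ a) b).support, |(i : ℝ)| ≤ Q) :
    |(a : ℝ)| ≤ |weight (fun i : ℤ => (i : ℝ) ^ 2) ℓ| +
        Q ^ 2 * l1Mass (eraseUnit (eraseUnit ℓ a) b) ∨
      |(a : ℝ)| ≤ |weight (fun i : ℤ => (i : ℝ)) ℓ| +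
        Q * l1Mass (eraseUnit (eraseUnit ℓ a) b) := by
  have hpair := abs_le_abs_signed_sq_or_abs_signed
    (Int.abs_sign_of_ne_zero (mem_support_iff.mp ha))
    (Int.abs_sign_of_ne_zero (mem_support_iff.mp hb))
    fun hab : a = b => by subst hab; exact (sign_eraseUnit_self hb).symm
  refine hpair.imp (fun hsq => ?_) fun hlin => ?_
  · refine le_trans (mod_cast hsq) (abs_signed_pair_le fun i hi => ?_)
    rw [abs_pow]
    exact pow_le_pow_left₀ (abs_nonneg _) (hQ i hi) 2
  · exact le_trans (mod_cast hlin) (abs_signed_pair_le hQ)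

lemma jap_le_two_mul_momentumScale_mul {ℓ : ℤ →₀ ℤ} {a b : ℤ} (ha : a ∈ ℓ.support)
    (hb : b ∈ (eraseUnit ℓ a).support)
    (henergy : |weight (fun i : ℤ => (i : ℝ) ^ 2) ℓ| ≤ 1 + (l1Mass ℓ : ℝ) / 2) :
    jap a ≤ 2 * momentumScale ℓ * japProd (absIndex (eraseUnit (eraseUnit ℓ a) b)) ^ 2 := by
  set ρ := eraseUnit (eraseUnit ℓ a) b
  set Q := japProd (absIndex ρ)
  have hQ : 1 ≤ Q ^ 2 := one_le_pow₀ (one_le_japProd _)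
  have hQ_self : Q ≤ Q ^ 2 := le_self_pow₀ (one_le_japProd _) two_ne_zero
  have hmass : (l1Mass ℓ : ℝ) = 1 + (1 + l1Mass ρ) := by
    exact_mod_cast l1Mass_eq_one_add hb ▸ l1Mass_eq_one_add ha
  have hindex (i : ℤ) (hi : i ∈ ρ.support) : |(i : ℝ)| ≤ Q :=
    (abs_le_jap i).trans (jap_le_japProd_absIndex hi)
  refine max_le ?_ (one_le_mul_of_one_le_of_one_le (by linarith [one_le_momentumScale ha]) hQ)
  rw [momentumScale]
  set π := weight (fun i : ℤ => (i : ℝ)) ℓ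
  rcases abs_le_energy_add_or_abs_le_momentum_add ha hb hindex with hen | hmom
  · calc |(a : ℝ)| ≤ 1 + (l1Mass ℓ : ℝ) / 2 + Q ^ 2 * l1Mass ρ := hen.trans (by gcongr)
      _ ≤ 2 * (l1Mass ℓ + |π|) * Q ^ 2 := by nlinarith [abs_nonneg π]
  · calc |(a : ℝ)| ≤ |π| + Q ^ 2 * l1Mass ρ := hmom.trans (by gcongr)
      _ ≤ 2 * (l1Mass ℓ + |π|) * Q ^ 2 := by nlinarith [abs_nonneg π]

lemma jap_pow_five_le {ℓ : ℤ →₀ ℤ} {a : ℤ} (ha : a ∈ ℓ.support)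
    (henergy : |weight (fun i : ℤ => (i : ℝ) ^ 2) ℓ| ≤ 1 + (l1Mass ℓ : ℝ) / 2) :
    jap a ^ 5 ≤ 2 * momentumScale ℓ ^ 3 * japProd (absIndex ℓ) ^ 2 := by
  set R := momentumScale ℓ
  have hR : 1 ≤ R := one_le_momentumScale ha
  have hA := jap_pos a
  rcases (eraseUnit ℓ a).support.eq_empty_or_nonempty with hempty | hne
  · have hmom : jap a ≤ R * 1 := jap_le_momentumScale_mul ha le_rfl (by simp [hempty])
    calc jap a ^ 5 = 1 * jap a ^ 3 * jap a ^ 2 := by ring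
      _ ≤ 2 * R ^ 3 * japProd (absIndex ℓ) ^ 2 := by
        gcongr
        · exact one_le_two
        · rwa [mul_one] at hmom
        · exact jap_le_japProd_absIndex ha
  · obtain ⟨b, hb, hmax⟩ := Finset.exists_max_image _ jap hne
    set Q := japProd (absIndex (eraseUnit (eraseUnit ℓ a) b))
    have hP : japProd (absIndex ℓ) = jap a * (jap b * Q) := by
      rw [japProd_absIndex_eq_mul ha, japProd_absIndex_eq_mul hb]
    have hmom : jap a ≤ R * jap b := jap_le_momentumScale_mul ha (one_le_jap b) hmax
    have hen : jap a ≤ 2 * R * Q ^ 2 := jap_le_two_mul_momentumScale_mul ha hb henergy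
    calc jap a ^ 5 = jap a ^ 2 * (jap a ^ 2 * jap a) := by ring
      _ ≤ jap a ^ 2 * ((R * jap b) ^ 2 * (2 * R * Q ^ 2)) := by gcongr
      _ = 2 * R ^ 3 * japProd (absIndex ℓ) ^ 2 := by rw [hP]; ring

end MomentumAndEnergy

section SmallDivisors

lemma abs_energy_le {ω : ℤ → ℝ} (hω : ∀ i : ℤ, |ω i - (i : ℝ) ^ 2| ≤ 1 / 2) {ℓ : ℤ →₀ ℤ}
    (hsmall : |weight ω ℓ| ≤ 1) :
    |weight (fun i : ℤ => (i : ℝ) ^ 2) ℓ| ≤ 1 + (l1Mass ℓ : ℝ) / 2 := by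
  have hdiff := abs_weight_sub_weight_le hω ℓ
  rw [abs_sub_comm] at hdiff
  have htri := abs_sub_abs_le_abs_sub (weight (fun i : ℤ => (i : ℝ) ^ 2) ℓ) (weight ω ℓ)
  linarith

lemma IsDiophantine.mul_rpow_le {s γ : ℝ} (hs : 1 ≤ s) {ω : ℤ → ℝ}
    (hdio : IsDiophantine (2 * s) γ ω) {ℓ : ℤ →₀ ℤ} (hℓ : ℓ ≠ 0) {X Y : ℝ} (hX : 0 ≤ X)
    (hXY : 2 * (l1Mass ℓ : ℝ) ^ 2 * japProd (absIndex ℓ) * X ≤ Y) :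
    γ * X ^ (3 * s) ≤ |weight ω ℓ| * Y ^ (3 * s) := by
  have hP := japProd_pos (absIndex ℓ)
  calc γ * X ^ (3 * s)
      ≤ |weight ω ℓ| * (2 * (l1Mass ℓ : ℝ) ^ 2 * japProd (absIndex ℓ)) ^ (3 * s) *
          X ^ (3 * s) := by
        gcongr
        exact hdio.le_abs_weight_mul hs hℓ
    _ = |weight ω ℓ| * (2 * (l1Mass ℓ : ℝ) ^ 2 * japProd (absIndex ℓ) * X) ^ (3 * s) := by
        rw [mul_assoc, ← Real.mul_rpow (by positivity) hX]
    _ ≤ |weight ω ℓ| * Y ^ (3 * s) := by gcongr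

lemma IsDiophantine.mul_jap_rpow_le_of_mem_support {s γ : ℝ} (hs : 1 ≤ s)
    {ω : ℤ → ℝ} (hω : ∀ i : ℤ, |ω i - (i : ℝ) ^ 2| ≤ 1 / 2) (hdio : IsDiophantine (2 * s) γ ω)
    {ℓ : ℤ →₀ ℤ} {a : ℤ} (ha : a ∈ ℓ.support) :
    γ * (jap a ^ 10) ^ (3 * s) ≤
      |weight ω ℓ| * (8 * momentumScale ℓ ^ 8 * japProd (absIndex ℓ) ^ 5) ^ (3 * s) := by
  set R := momentumScale ℓ
  set P := japProd (absIndex ℓ)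
  have hR : 1 ≤ R := one_le_momentumScale ha
  have hP : 0 < P := japProd_pos _
  have hA := jap_pos a
  rcases le_or_gt 1 |weight ω ℓ| with hlarge | hsmall
  · have hpow : jap a ^ 10 ≤ 8 * R ^ 8 * P ^ 5 := by
      calc jap a ^ 10 = (jap a ^ 2) ^ 5 := by ring
        _ ≤ (R * P) ^ 5 := by gcongr; exact jap_sq_le_momentumScale_mul ha
        _ = 1 * R ^ 5 * P ^ 5 := by ring
        _ ≤ 8 * R ^ 8 * P ^ 5 := by gcongr <;> norm_num
    have hω0 : |ω 0| ≤ 1 / 2 := by simpa using hω 0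
    have hγ : γ ≤ |weight ω ℓ| := by linarith [hdio.lt_two_mul_abs]
    gcongr
  · have hℓ : ℓ ≠ 0 := support_nonempty_iff.mp ⟨a, ha⟩
    refine hdio.mul_rpow_le hs hℓ (by positivity) ?_
    calc 2 * (l1Mass ℓ : ℝ) ^ 2 * P * jap a ^ 10
        = 2 * (l1Mass ℓ : ℝ) ^ 2 * P * (jap a ^ 5) ^ 2 := by ring
      _ ≤ 2 * R ^ 2 * P * (2 * R ^ 3 * P ^ 2) ^ 2 := by
        gcongr
        · exact l1Mass_le_momentumScale ℓ
        · exact jap_pow_five_le ha (abs_energy_le hω hsmall.le)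
      _ = 8 * R ^ 8 * P ^ 5 := by ring

lemma IsDiophantine.mul_jap_rpow_le {s γ : ℝ} (hs : 1 ≤ s)
    {ω : ℤ → ℝ} (hω : ∀ i : ℤ, |ω i - (i : ℝ) ^ 2| ≤ 1 / 2) (hdio : IsDiophantine (2 * s) γ ω)
    {α β : ℤ →₀ ℕ} (hne : α ≠ β) {j : ℤ} (hj : 1 ≤ α j + β j) :
    γ * (jap j ^ 10) ^ (3 * s) ≤ |weight ω (diffIndex α β)| *
      (8 * momentumScale (diffIndex α β) ^ 8 * japProd (α + β) ^ 5) ^ (3 * s) := by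
  set ℓ := diffIndex α β with hℓ
  have hℓ0 : ℓ ≠ 0 := diffIndex_ne_zero hne
  obtain ⟨i, hi⟩ := support_nonempty_iff.mpr hℓ0
  have hR : 1 ≤ momentumScale ℓ := one_le_momentumScale hi
  have hP := one_le_japProd (absIndex ℓ)
  by_cases hjℓ : j ∈ ℓ.support
  · refine (hdio.mul_jap_rpow_le_of_mem_support hs hω hjℓ).trans ?_
    gcongr
    exact japProd_mono (absIndex_diffIndex_le α β)
  · have heq : α j = β j := by
      rw [hℓ, notMem_support_iff, diffIndex_apply] at hjℓ
      omega
    have hA := jap_pos j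
    refine hdio.mul_rpow_le hs hℓ0 (by positivity) ?_
    calc 2 * (l1Mass ℓ : ℝ) ^ 2 * japProd (absIndex ℓ) * jap j ^ 10
        ≤ 2 * (l1Mass ℓ : ℝ) ^ 2 * japProd (absIndex ℓ) ^ 5 * jap j ^ 10 := by
          gcongr
          exact le_self_pow₀ hP (by norm_num)
      _ = 2 * (l1Mass ℓ : ℝ) ^ 2 * (jap j ^ 2 * japProd (absIndex ℓ)) ^ 5 := by ring
      _ ≤ 8 * momentumScale ℓ ^ 8 * japProd (α + β) ^ 5 := by
          gcongr
          · norm_num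
          · calc (l1Mass ℓ : ℝ) ^ 2 ≤ momentumScale ℓ ^ 2 := by
                  gcongr
                  exact l1Mass_le_momentumScale ℓ
              _ ≤ momentumScale ℓ ^ 8 := pow_le_pow_right₀ hR (by norm_num)
          · exact jap_sq_mul_japProd_le (by omega) heq

lemma rpow_le_exp_mul_rpow_mul_rpow {σ R P : ℝ} (hσ : 0 ≤ σ) (hR : 1 ≤ R) (hP : 0 ≤ P) :
    (8 * R ^ 8 * P ^ 5) ^ σ ≤ Real.exp (18 * σ) * R ^ (15 * σ) * P ^ (5 * σ) := by
  have hR0 : 0 ≤ R := zero_le_one.trans hR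
  have hexp : (8 : ℝ) ≤ Real.exp 18 := by linarith [Real.add_one_le_exp (18 : ℝ)]
  calc (8 * R ^ 8 * P ^ 5) ^ σ ≤ (Real.exp 18 * R ^ 15 * P ^ 5) ^ σ := by
        gcongr
        norm_num
    _ = Real.exp (18 * σ) * R ^ (15 * σ) * P ^ (5 * σ) := by
        rw [Real.mul_rpow (by positivity) (by positivity),
          Real.mul_rpow (by positivity) (by positivity), Real.exp_mul, Real.rpow_mul hR0,
          Real.rpow_mul hP, Real.rpow_ofNat, Real.rpow_ofNat]

end SmallDivisors

theorem sobolev_small_divisor_estimate_general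
    {q γ : ℝ} (hq : 0 ≤ q) {ω : ℤ → ℝ} (hω : ∀ i : ℤ, |ω i - (i : ℝ) ^ 2| ≤ 1 / 2)
    (hdio : IsDiophantine (2 + q) γ ω) {α β : ℤ →₀ ℕ} (hne : α ≠ β)
    {N : ℕ} (hN : N = (α.sum fun _ n => n) + β.sum fun _ n => n)
    {π : ℝ} (hπ : π = ∑ i ∈ α.support ∪ β.support, (i : ℝ) * ((α i : ℝ) - (β i : ℝ)))
    {j : ℤ} (hj : 1 ≤ α j + β j) :
    γ * jap j ^ (2 * ((15 / 2) * (2 + q))) ≤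
      Real.exp (27 * (2 + q)) * ((N : ℝ) + |π|) ^ (3 * ((15 / 2) * (2 + q))) *
        |∑ i ∈ α.support ∪ β.support, ω i * ((α i : ℝ) - (β i : ℝ))| *
        ∏ i ∈ α.support ∪ β.support,
          jap i ^ (((15 / 2) * (2 + q)) * ((α i : ℝ) + (β i : ℝ))) := by
  obtain ⟨s, rfl⟩ : ∃ s, q = 2 * s - 2 := ⟨(q + 2) / 2, by ring⟩
  have hs : 1 ≤ s := by linarith
  rw [add_sub_cancel] at hdio ⊢
  obtain ⟨i, hi⟩ := support_nonempty_iff.mpr (diffIndex_ne_zero hne)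
  have hscale_pos := one_le_momentumScale hi
  rw [sum_union_support_eq_weight_diffIndex] at hπ ⊢
  rw [prod_union_support_jap_rpow]
  have hscale : momentumScale (diffIndex α β) ≤ N + |π| := by
    rw [hN, hπ]
    exact momentumScale_diffIndex_le α β
  have hP := japProd_pos (α + β)
  calc γ * jap j ^ (2 * (15 / 2 * (2 * s)))
      = γ * (jap j ^ 10) ^ (3 * s) := by
        rw [← Real.rpow_natCast_mul (jap_pos j).le]
        ring_nf
    _ ≤ |weight ω (diffIndex α β)| *
          (8 * momentumScale (diffIndex α β) ^ 8 * japProd (α + β) ^ 5) ^ (3 * s) :=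
        hdio.mul_jap_rpow_le hs hω hne hj
    _ ≤ |weight ω (diffIndex α β)| * (8 * (N + |π|) ^ 8 * japProd (α + β) ^ 5) ^ (3 * s) := by
        gcongr
    _ ≤ |weight ω (diffIndex α β)| * (Real.exp (18 * (3 * s)) * (N + |π|) ^ (15 * (3 * s)) *
          japProd (α + β) ^ (5 * (3 * s))) := by
        gcongr
        exact rpow_le_exp_mul_rpow_mul_rpow (by positivity) (hscale_pos.trans hscale) hP.le
    _ = _ := by ring_nf

/-- (Homological-equation small-divisor estimate, Sobolev case.) Under the
Diophantine conditions on `ω`, with `τ := (15/2)(2+q)`, for all finitely supported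
`α ≠ β : ℤ → ℕ` with equal total mass `≥ 1` and every `j` with `α_j + β_j ≥ 1`,
`γ⟨j⟩^{2τ} ≤ e^{27(2+q)}(N+|π|)^{3τ}|∑ ω_i(α_i−β_i)|∏_i ⟨i⟩^{τ(α_i+β_i)}`. -/
theorem sobolev_small_divisor_estimate
    (q γ : ℝ) (hq : 0 ≤ q) (hγ0 : 0 < γ) (hγ1 : γ ≤ 1)
    (ω : ℤ → ℝ)
    (hω : ∀ j : ℤ, |ω j - (j : ℝ) ^ 2| * jap j ^ q ≤ 1 / 2)
    (hdio : ∀ ℓ : ℤ →₀ ℤ, ℓ ≠ 0 →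
      γ * ∏ n ∈ ℓ.support, (1 + (ℓ n : ℝ) ^ 2 * jap n ^ (2 + q))⁻¹ <
        |∑ n ∈ ℓ.support, ω n * (ℓ n : ℝ)|)
    (α β : ℤ →₀ ℕ) (hne : α ≠ β)
    (hmass : (α.sum fun _ n => n) = β.sum fun _ n => n)
    (hmass1 : 1 ≤ α.sum fun _ n => n)
    (N : ℕ) (hN : N = (α.sum fun _ n => n) + β.sum fun _ n => n)
    (π : ℝ)
    (hπ : π = ∑ i ∈ α.support ∪ β.support, (i : ℝ) * ((α i : ℝ) - (β i : ℝ)))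
    (j : ℤ) (hj : 1 ≤ α j + β j) :
    γ * jap j ^ (2 * ((15 / 2) * (2 + q))) ≤
      Real.exp (27 * (2 + q)) * ((N : ℝ) + |π|) ^ (3 * ((15 / 2) * (2 + q))) *
        |∑ i ∈ α.support ∪ β.support, ω i * ((α i : ℝ) - (β i : ℝ))| *
        ∏ i ∈ α.support ∪ β.support,
          jap i ^ (((15 / 2) * (2 + q)) * ((α i : ℝ) + (β i : ℝ))) := by
  have hω' (i : ℤ) : |ω i - (i : ℝ) ^ 2| ≤ 1 / 2 :=
    (le_mul_of_one_le_right (abs_nonneg _) (Real.one_le_rpow (one_le_jap i) hq)).trans (hω i)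
  exact sobolev_small_divisor_estimate_general hq hω' hdio hne hN hπ hj
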